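/- Let G be a finite connected simple graph with at least one edge, let {i,j} be any edge of G, and let G′ be the graph obtained by attaching a 4-cycle to G at the edge {i,j}. Then the edge polytope 𝒫_{G′} is type II decomposable, regardless of which edge {i,j} is chosen. -/

import Mathlib

/-- For an edge `e = {i,j}` of a graph on `[d]`, `rho e = 𝐞ᵢ + 𝐞ⱼ ∈ ℝ^d`. -/
noncomputable def rho {d : ℕ} (e : Sym2 (Fin d)) : Fin d → ℝ :=
  Sym2.lift ⟨fun i j => Pi.single i 1 + Pi.single j 1, fun _ _ => add_comm _ _⟩ e

/-- The edge polytope of a graph `G` on `[d]`: the convex hull of `{ρ(e) : e ∈ E(G)}`. -/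
noncomputable def edgePolytope {d : ℕ} (G : SimpleGraph (Fin d)) : Set (Fin d → ℝ) :=
  convexHull ℝ (rho '' G.edgeSet)

/-- A set is integral if all its extreme points have integer coordinates. -/
def IsIntegralSet {d : ℕ} (Q : Set (Fin d → ℝ)) : Prop :=
  ∀ x ∈ Q.extremePoints ℝ, ∀ i, ∃ n : ℤ, x i = (n : ℝ)

/-- The hyperplane `{x : ∑ aᵢxᵢ = c}` is a separating hyperplane of `𝒫_G`: it meets
`𝒫_G \ ∂𝒫_G` (the intrinsic interior), and both closed half-space slices are integral. -/
def IsSepHyperplane {d : ℕ} (G : SimpleGraph (Fin d)) (a : Fin d → ℝ) (c : ℝ) : Prop :=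
  a ≠ 0 ∧
  (∃ x ∈ intrinsicInterior ℝ (edgePolytope G), ∑ i, a i * x i = c) ∧
  IsIntegralSet (edgePolytope G ∩ {x | c ≤ ∑ i, a i * x i}) ∧
  IsIntegralSet (edgePolytope G ∩ {x | ∑ i, a i * x i ≤ c})

/-- `𝒫_G` is decomposable if it has a separating hyperplane. -/
def Decomposable {d : ℕ} (G : SimpleGraph (Fin d)) : Prop :=
  ∃ a c, IsSepHyperplane G a c

/-- Type II decomposability: a separating hyperplane through `0` with all `aᵢ ∈ {0,1,-1}`,
some `aᵢ = 0`, and no edge with signature `{1,1}` or `{-1,-1}`. -/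
def TypeIIDecomposable {d : ℕ} (G : SimpleGraph (Fin d)) : Prop :=
  ∃ a : Fin d → ℝ, (∀ i, a i = 0 ∨ a i = 1 ∨ a i = -1) ∧ (∃ i, a i = 0) ∧
    (∀ i j, G.Adj i j → ¬(a i = 1 ∧ a j = 1) ∧ ¬(a i = -1 ∧ a j = -1)) ∧
    IsSepHyperplane G a 0

/-- Attaching a 4-cycle to `G` at the edge `{i,j}`: add two new vertices `x₁ = d`, `x₂ = d+1`
and the three edges `{i,x₁}`, `{x₁,x₂}`, `{x₂,j}`. -/
def attachFourCycle {d : ℕ} (G : SimpleGraph (Fin d)) (i j : Fin d) :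
    SimpleGraph (Fin (d + 2)) :=
  SimpleGraph.fromEdgeSet
    ((Sym2.map (Fin.castLE (by omega : d ≤ d + 2))) '' G.edgeSet ∪
      {s(Fin.castLE (by omega) i, (⟨d, by omega⟩ : Fin (d + 2))),
       s((⟨d, by omega⟩ : Fin (d + 2)), (⟨d + 1, by omega⟩ : Fin (d + 2))),
       s((⟨d + 1, by omega⟩ : Fin (d + 2)), Fin.castLE (by omega) j)})

open Set

section Convexity

variable {E : Type*}

theorem AffineSubspace.coe_homothety [AddCommGroup E] [Module ℝ E] {A : AffineSubspace ℝ E}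
    [Nonempty A] (v z : A) (a : ℝ) :
    (AffineMap.homothety v a z : E) = a • (z : E) + (1 - a) • (v : E) := by
  change a • ((z : E) - v) + v = _
  module

/-- Contracting the intrinsic interior of a convex set towards one of its points stays inside the
intrinsic interior. -/
theorem Convex.combo_mem_intrinsicInterior [NormedAddCommGroup E] [NormedSpace ℝ E] {s : Set E}
    (hs : Convex ℝ s) {y v : E} (hy : y ∈ intrinsicInterior ℝ s) (hv : v ∈ s) {a b : ℝ}
    (ha : 0 < a) (hb : 0 ≤ b) (hab : a + b = 1) :
    a • y + b • v ∈ intrinsicInterior ℝ s := by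
  obtain ⟨v, rfl⟩ : ∃ w : affineSpan ℝ s, (w : E) = v := ⟨⟨v, subset_affineSpan ℝ s hv⟩, rfl⟩
  have : Nonempty (affineSpan ℝ s) := ⟨v⟩
  obtain ⟨y, hyi, rfl⟩ := mem_intrinsicInterior.1 hy
  obtain rfl : b = 1 - a := by linarith
  refine mem_intrinsicInterior.2 ⟨AffineMap.homothety v a y, ?_,
    AffineSubspace.coe_homothety v y a⟩
  refine interior_maximal ?_ (AffineMap.homothety_isOpenMap v a ha.ne' _ isOpen_interior)
    (mem_image_of_mem _ hyi)
  rintro _ ⟨z, hz, rfl⟩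
  rw [mem_preimage, AffineSubspace.coe_homothety]
  have hzs : (z : E) ∈ s := mem_preimage.1 (interior_subset hz)
  exact hs hzs hv ha.le hb hab

/-- A linear functional taking values of both signs on a finite-dimensional convex set vanishes
somewhere on its intrinsic interior. -/
theorem Convex.exists_mem_intrinsicInterior_eq_zero [NormedAddCommGroup E] [NormedSpace ℝ E]
    [FiniteDimensional ℝ E] {s : Set E} (hs : Convex ℝ s) (f : E →ₗ[ℝ] ℝ) {u v : E}
    (hu : u ∈ s) (hv : v ∈ s) (hfu : 0 < f u) (hfv : f v < 0) :
    ∃ x ∈ intrinsicInterior ℝ s, f x = 0 := by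
  obtain ⟨y, hy⟩ := Set.Nonempty.intrinsicInterior hs ⟨u, hu⟩
  have key (g : E →ₗ[ℝ] ℝ) {w : E} (hw : w ∈ s) (hgy : 0 ≤ g y) (hgw : g w < 0) :
      ∃ x ∈ intrinsicInterior ℝ s, g x = 0 := by
    have hpos : 0 < g y - g w := by linarith
    refine ⟨_, hs.combo_mem_intrinsicInterior hy hw (a := -g w / (g y - g w))
      (b := g y / (g y - g w)) (div_pos (by linarith) hpos) (div_nonneg hgy hpos.le)
      (by field_simp; ring), ?_⟩
    simp only [map_add, map_smul, smul_eq_mul]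
    field_simp
    ring
  rcases le_total 0 (f y) with h | h
  · exact key f hv h hfv
  · obtain ⟨x, hx, hfx⟩ := key (-f) hu (by simpa using h) (by simpa using hfu)
    exact ⟨x, hx, by simpa using hfx⟩

/-- If `f` vanishes on `S`, takes the values `1` and `-1` at `u` and `v`, and `u + v = p + q` with
`p, q ∈ S`, then cutting the convex hull of `S ∪ {u, v}` by `0 ≤ f` merely discards `v`. -/
theorem convexHull_insert_insert_inter_nonneg [AddCommGroup E] [Module ℝ E] {S : Set E}
    (f : E →ₗ[ℝ] ℝ) {u v p q : E} (hp : p ∈ S) (hq : q ∈ S) (huv : u + v = p + q)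
    (hS : ∀ x ∈ S, f x = 0) (hfu : f u = 1) (hfv : f v = -1) :
    convexHull ℝ (insert u (insert v S)) ∩ {x | 0 ≤ f x} = convexHull ℝ (insert u S) := by
  have hfS : ∀ x ∈ convexHull ℝ S, f x = 0 := fun x hx =>
    convexHull_min (t := {x | f x = 0}) hS (convex_hyperplane f.isLinear 0) hx
  have hsub : convexHull ℝ S ⊆ convexHull ℝ (insert u S) := convexHull_mono (subset_insert _ _)
  have hconv := convex_convexHull ℝ (insert u S)
  apply Subset.antisymm
  · rintro x ⟨hx, hfx⟩
    rw [convexHull_insert (insert_nonempty _ _), convexHull_insert ⟨p, hp⟩] at hx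
    obtain ⟨u', hu', z, hz, a, b, ha, hb, hab, rfl⟩ := mem_convexJoin.1 hx
    obtain ⟨v', hv', y, hy, c, e, hc, he, hce, rfl⟩ := mem_convexJoin.1 hz
    rw [mem_singleton_iff] at hu' hv'
    subst u' v'
    simp only [mem_ofPred_eq, map_add, map_smul, smul_eq_mul, hfu, hfv, hfS y hy] at hfx
    have hrw : a • u + b • (c • v + e • y)
        = ∑ k : Fin 4, ![a - b * c, b * c, b * c, b * e] k • ![u, p, q, y] k := by
      obtain rfl : v = p + q - u := by rw [← huv]; abel
      simp only [Fin.sum_univ_four, Matrix.cons_val]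
      module
    rw [hrw]
    refine hconv.sum_mem ?_ ?_ ?_
    · intro k _
      fin_cases k
      · simp; linarith
      all_goals simp; positivity
    · simp only [Fin.sum_univ_four, Matrix.cons_val]
      linear_combination hab + b * hce
    · intro k _
      fin_cases k
      · exact subset_convexHull ℝ _ (mem_insert _ _)
      · exact hsub (subset_convexHull ℝ _ hp)
      · exact hsub (subset_convexHull ℝ _ hq)
      · exact hsub hy
  · refine subset_inter (convexHull_mono (insert_subset_insert (subset_insert _ _))) ?_
    refine convexHull_min ?_ (convex_halfSpace_ge f.isLinear 0)
    rintro x (rfl | hx)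
    · simp [hfu]
    · simp [hS x hx]

end Convexity

theorem exists_int_eq_rho {d : ℕ} (e : Sym2 (Fin d)) (k : Fin d) : ∃ n : ℤ, rho e k = n := by
  induction e with
  | _ x y =>
    refine ⟨(Pi.single x 1 + Pi.single y 1 : Fin d → ℤ) k, ?_⟩
    simp [rho, Pi.single_apply]

theorem isIntegralSet_convexHull {d : ℕ} {T : Set (Fin d → ℝ)} (hT : T ⊆ range rho) :
    IsIntegralSet (convexHull ℝ T) := by
  intro x hx k
  obtain ⟨e, rfl⟩ := hT (extremePoints_convexHull_subset hx)
  exact exists_int_eq_rho e k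

theorem edgeSet_attachFourCycle {d : ℕ} (G : SimpleGraph (Fin d)) (i j : Fin d) :
    (attachFourCycle G i j).edgeSet =
      insert s(Fin.castLE (by omega) i, (⟨d, by omega⟩ : Fin (d + 2)))
        (insert s((⟨d + 1, by omega⟩ : Fin (d + 2)), Fin.castLE (by omega) j)
          (insert s((⟨d, by omega⟩ : Fin (d + 2)), (⟨d + 1, by omega⟩ : Fin (d + 2)))
            (Sym2.map (Fin.castLE (by omega : d ≤ d + 2)) '' G.edgeSet))) := by
  rw [attachFourCycle, SimpleGraph.edgeSet_fromEdgeSet, sdiff_eq_left.2]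
  · ext e
    simp only [mem_union, mem_insert_iff, mem_singleton_iff]
    tauto
  · rw [disjoint_left]
    rintro e (⟨e, he, rfl⟩ | rfl | rfl | rfl) hdiag
    · induction e with
      | _ x y =>
        have hxy : x = y := by simpa [Sym2.map_mk] using hdiag
        simp [hxy] at he
    all_goals
      simp [Fin.ext_iff] at hdiag
      try omega

/-- Let `G` be a finite connected simple graph with an edge `{i,j}`, and let
`G'` be obtained by attaching a 4-cycle to `G` at `{i,j}`. Then `𝒫_{G'}` is type II
decomposable, regardless of which edge is chosen. -/
theorem attachFourCycle_typeII {d : ℕ} (G : SimpleGraph (Fin d)) (hG : G.Connected)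
    (i j : Fin d) (hij : G.Adj i j) :
    TypeIIDecomposable (attachFourCycle G i j) := by
  have hE := edgeSet_attachFourCycle G i j
  have hcast (k : Fin d) : (Fin.castLE (by omega : d ≤ d + 2) k : ℕ) ≠ d ∧
      (Fin.castLE (by omega : d ≤ d + 2) k : ℕ) ≠ d + 1 := by
    simp only [Fin.val_castLE]
    omega
  set i' : Fin (d + 2) := Fin.castLE (by omega) i
  set j' : Fin (d + 2) := Fin.castLE (by omega) j
  set x₁ : Fin (d + 2) := ⟨d, by omega⟩ with hx₁
  set x₂ : Fin (d + 2) := ⟨d + 1, by omega⟩ with hx₂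
  have hne : x₁ ≠ x₂ := by simp [hx₁, hx₂]
  have hcast₁ (k : Fin d) : Fin.castLE (by omega : d ≤ d + 2) k ≠ x₁ :=
    fun h => (hcast k).1 (congrArg Fin.val h)
  have hcast₂ (k : Fin d) : Fin.castLE (by omega : d ≤ d + 2) k ≠ x₂ :=
    fun h => (hcast k).2 (congrArg Fin.val h)
  have hi₁ : i' ≠ x₁ := hcast₁ i
  have hi₂ : i' ≠ x₂ := hcast₂ i
  have hj₁ : j' ≠ x₁ := hcast₁ j
  have hj₂ : j' ≠ x₂ := hcast₂ j
  set E₀ := insert s(x₁, x₂) (Sym2.map (Fin.castLE (by omega : d ≤ d + 2)) '' G.edgeSet)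
  let f : (Fin (d + 2) → ℝ) →ₗ[ℝ] ℝ :=
    LinearMap.proj (R := ℝ) (φ := fun _ => ℝ) x₁ - LinearMap.proj (R := ℝ) (φ := fun _ => ℝ) x₂
  let a : Fin (d + 2) → ℝ := Pi.single x₁ 1 - Pi.single x₂ 1
  have hf (x : Fin (d + 2) → ℝ) : ∑ k, a k * x k = f x := by
    simp [a, f, sub_mul, Finset.sum_sub_distrib, Pi.single_apply]
  have hfrho (x y : Fin (d + 2)) : f (rho s(x, y)) = a x + a y := by
    simp only [f, a, rho, Sym2.lift_mk, LinearMap.sub_apply, LinearMap.proj_apply, Pi.add_apply,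
      Pi.sub_apply, Pi.single_apply, eq_comm (a := x₁), eq_comm (a := x₂)]
    ring
  have ha₁ : a x₁ = 1 := by simp [a, hne]
  have ha₂ : a x₂ = -1 := by simp [a, hne.symm]
  have ha₀ (k : Fin (d + 2)) (h₁ : k ≠ x₁) (h₂ : k ≠ x₂) : a k = 0 := by simp [a, h₁, h₂]
  have ha (k : Fin (d + 2)) :
      (a k = 0 ∧ k ≠ x₁ ∧ k ≠ x₂) ∨ (a k = 1 ∧ k = x₁) ∨ (a k = -1 ∧ k = x₂) := by
    by_cases h₁ : k = x₁
    · exact .inr (.inl ⟨h₁ ▸ ha₁, h₁⟩)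
    by_cases h₂ : k = x₂
    · exact .inr (.inr ⟨h₂ ▸ ha₂, h₂⟩)
    exact .inl ⟨ha₀ k h₁ h₂, h₁, h₂⟩
  have hpoly : edgePolytope (attachFourCycle G i j) =
      convexHull ℝ (insert (rho s(i', x₁)) (insert (rho s(x₂, j')) (rho '' E₀))) := by
    rw [edgePolytope, hE, image_insert_eq, image_insert_eq]
  have hp : rho s(x₁, x₂) ∈ rho '' E₀ := mem_image_of_mem _ (mem_insert _ _)
  have hq : rho s(i', j') ∈ rho '' E₀ :=
    mem_image_of_mem _ (mem_insert_of_mem _ ⟨s(i, j), hij, rfl⟩)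
  have hsum : rho s(i', x₁) + rho s(x₂, j') = rho s(x₁, x₂) + rho s(i', j') := by
    simp only [rho, Sym2.lift_mk]
    abel
  have hS : ∀ x ∈ rho '' E₀, f x = 0 := by
    rintro _ ⟨e, (rfl | ⟨e, -, rfl⟩), rfl⟩
    · rw [hfrho, ha₁, ha₂, add_neg_cancel]
    · induction e with
      | _ x y =>
        rw [Sym2.map_mk, hfrho, ha₀ _ (hcast₁ x) (hcast₂ x), ha₀ _ (hcast₁ y) (hcast₂ y), add_zero]
  have hfu : f (rho s(i', x₁)) = 1 := by rw [hfrho, ha₁, ha₀ i' hi₁ hi₂, zero_add]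
  have hfv : f (rho s(x₂, j')) = -1 := by rw [hfrho, ha₂, ha₀ j' hj₁ hj₂, add_zero]
  refine ⟨a, fun k => ?_, ⟨i', ha₀ i' hi₁ hi₂⟩, fun x y hxy => ?_, ?_, ?_, ?_, ?_⟩
  · rcases ha k with h | h | h <;> simp [h.1]
  · have := hxy.ne
    constructor <;> rintro ⟨hx, hy⟩ <;>
      rcases ha x with h | h | h <;> rcases ha y with h' | h' | h' <;>
      first
        | exact this (h.2.trans h'.2.symm)
        | (have := h.1; have := h'.1; linarith)
  · intro h
    simp [h] at ha₁
  · simp only [hf, hpoly]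
    exact (convex_convexHull ℝ _).exists_mem_intrinsicInterior_eq_zero f
      (subset_convexHull ℝ _ (mem_insert _ _))
      (subset_convexHull ℝ _ (mem_insert_of_mem _ (mem_insert _ _)))
      (by rw [hfu]; norm_num) (by rw [hfv]; norm_num)
  · simp only [hf, hpoly]
    rw [convexHull_insert_insert_inter_nonneg f hp hq hsum hS hfu hfv, ← image_insert_eq]
    exact isIntegralSet_convexHull (image_subset_range _ _)
  · have hneg : {x | f x ≤ 0} = {x | 0 ≤ (-f) x} := by ext; simp
    simp only [hf, hpoly]
    rw [hneg, insert_comm, convexHull_insert_insert_inter_nonneg (-f) hp hq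
      ((add_comm _ _).trans hsum) (fun x hx => by simp [hS x hx]) (by simp [hfv]) (by simp [hfu]),
      ← image_insert_eq]
    exact isIntegralSet_convexHull (image_subset_range _ _)
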